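/- arXiv:1712.08942 — 2 statements merged into one kernel-verified Lean document; each statement's English description precedes it below -/
import Mathlib

section
/- Let m ≥ 1 and let C : ℤ^m → [0,∞) satisfy: (i) C is even and C(x) = 0 iff x = 0; (ii) C(x) ≤ C(y) whenever x ⪯ y; (iii') there exists a monotone norm ∥·∥⋆ on ℝ^m such that C(x)/∥x∥⋆ ≤ C(x')/∥x'∥⋆ for all nonzero x', x ∈ ℤ^m with x' ⪯ x; and additionally C(x) = C(x̄) for every x ∈ ℤ^m. Fix positive integers N_1, …, N_m with N := N_1 + … + N_m. Then the set K := conv{q_D : D ∈ Ā \ {0}} is a compact, convex set, symmetric with respect to the origin, with 0 in its interior, and the norm on ℝ^N whose unit ball is K is monotone and satisfies the compatibility equation for C. -/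
/-!
The cost `c_D` depends only on the absolute values of `D`, so changing signs of coordinates permutes
the points `q_D`; since the cube `[-1, 1]^N` is the convex hull of its vertices, `K` is therefore
solid. Solidity yields the symmetry of `K`, the monotonicity of its gauge, and, as `K` contains a
multiple of the all-ones vector, that `0` is interior to `K`.

Compatibility reduces to `gauge K D = c_D` for `D ∈ Ā`, where `≤` holds because `D = c_D • q_D`. For
`≥`, let `x = β(D̄)` and consider the seminorm `p v = ∥β(|D| |v|)∥⋆`. At `q_E` it equals
`∥x'∥⋆ / c_E` with `x' = β(|D| |E|)`, and `x' ⪯ x`, `x' ⪯ β(Ē)` combine with (ii) and (iii') to give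
`p q_E ≤ ∥x∥⋆ / C x`. So `p ≤ (∥x∥⋆ / C x) gauge K`, and `p D = ∥x∥⋆`.
-/

/-- `f` is a norm on the real vector space `E`. -/
def IsNorm {E : Type*} [AddCommGroup E] [Module ℝ E] (f : E → ℝ) : Prop :=
  (∀ x, 0 ≤ f x) ∧ (∀ x, f x = 0 ↔ x = 0) ∧
    (∀ x y, f (x + y) ≤ f x + f y) ∧ ∀ (c : ℝ) (x : E), f (c • x) = |c| * f x

/-- The partial order `x ⪯ y` on real vectors. -/
def PreOrd {ι : Type*} (x y : ι → ℝ) : Prop :=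
  ∀ j, |x j| ≤ |y j| ∧ 0 ≤ x j * y j

/-- The partial order `x ⪯ y` on integer vectors. -/
def PreOrdInt {ι : Type*} (x y : ι → ℤ) : Prop :=
  ∀ j, |x j| ≤ |y j| ∧ 0 ≤ x j * y j

/-- The compatibility equation between a cost `C : ℤ^m → ℝ` and a norm on `ℝ^N`,
where `{1, …, N}` is partitioned into blocks of sizes `N_1, …, N_m` (realized as the
sigma type `Σ i, Fin (N i)`). -/
def CompatEq (m : ℕ) (N : Fin m → ℕ) (C : (Fin m → ℤ) → ℝ)
    (nrm : ((Σ i : Fin m, Fin (N i)) → ℝ) → ℝ) : Prop :=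
  ∀ θ : Fin m → ℤ, (∀ i, (θ i).natAbs ≤ N i) →
    ∀ K : (i : Fin m) → Finset (Fin (N i)), (∀ i, (K i).card = (θ i).natAbs) →
      C θ = nrm fun j => ((θ j.1).sign : ℝ) * (if j.2 ∈ K j.1 then 1 else 0)

/-- `D ∈ Ā`, i.e. all coordinates of `D ∈ ℤ^N` lie in `{-1, 0, 1}`. -/
def inAbar {m : ℕ} {N : Fin m → ℕ} (D : (Σ i : Fin m, Fin (N i)) → ℤ) : Prop :=
  ∀ j, D j = -1 ∨ D j = 0 ∨ D j = 1

/-- `β(D̄) ∈ ℤ^m`: the vector of block sums of the coordinatewise absolute value of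
`D`. -/
def blockAbsSum {m : ℕ} (N : Fin m → ℕ) (D : (Σ i : Fin m, Fin (N i)) → ℤ) :
    Fin m → ℤ :=
  fun i => ∑ k : Fin (N i), |D ⟨i, k⟩|

/-- `c_D := C(β(D̄))`. -/
def cD {m : ℕ} (N : Fin m → ℕ) (C : (Fin m → ℤ) → ℝ)
    (D : (Σ i : Fin m, Fin (N i)) → ℤ) : ℝ :=
  C (blockAbsSum N D)

/-- `q_D := D / c_D ∈ ℝ^N`. -/
noncomputable def qD {m : ℕ} (N : Fin m → ℕ) (C : (Fin m → ℤ) → ℝ)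
    (D : (Σ i : Fin m, Fin (N i)) → ℤ) : (Σ i : Fin m, Fin (N i)) → ℝ :=
  fun j => (D j : ℝ) / cD N C D

/-- `K := conv {q_D : D ∈ Ā \ {0}} ⊆ ℝ^N`. -/
def Kconv {m : ℕ} (N : Fin m → ℕ) (C : (Fin m → ℤ) → ℝ) :
    Set ((Σ i : Fin m, Fin (N i)) → ℝ) :=
  convexHull ℝ {v | ∃ D, inAbar D ∧ D ≠ 0 ∧ v = qD N C D}

open LatticeOrderedAddCommGroup (IsSolid)
open scoped Topology

section Gauge

theorem isNorm_gauge {E : Type*} [AddCommGroup E] [Module ℝ E] [TopologicalSpace E] [T1Space E]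
    {s : Set E} (hconv : Convex ℝ s) (hneg : ∀ x ∈ s, -x ∈ s) (habs : Absorbent ℝ s)
    (hbdd : Bornology.IsVonNBounded ℝ s) : IsNorm (gauge s) :=
  ⟨gauge_nonneg, fun _ => gauge_eq_zero habs hbdd, gauge_add_le hconv habs,
    gauge_smul ((balanced_iff_neg_mem hconv).2 hneg)⟩

theorem seminorm_le_mul_gauge_convexHull {E : Type*} [AddCommGroup E] [Module ℝ E]
    (p : Seminorm ℝ E) {s : Set E} (habs : Absorbent ℝ (convexHull ℝ s)) {c : ℝ} (hc : 0 < c)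
    (hp : ∀ v ∈ s, p v ≤ c) (x : E) : p x ≤ c * gauge (convexHull ℝ s) x := by
  have hull_le : ∀ v ∈ convexHull ℝ s, p v ≤ c := fun v hv =>
    p.mem_closedBall_zero.1 <|
      convexHull_min (fun w hw => p.mem_closedBall_zero.2 (hp w hw)) (p.convex_closedBall 0 c) hv
  rw [← div_le_iff₀' hc]
  refine le_of_forall_gt_imp_ge_of_dense fun a ha => ?_
  obtain ⟨b, hb, hba, v, hv, rfl⟩ := exists_lt_of_gauge_lt habs ha
  rw [div_le_iff₀' hc]
  calc p (b • v) = b * p v := by rw [map_smul_eq_mul, Real.norm_of_nonneg hb.le]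
    _ ≤ b * c := by gcongr; exact hull_le v hv
    _ ≤ c * a := by rw [mul_comm]; gcongr

end Gauge

section Solid

variable {ι : Type*} {s : Set (ι → ℝ)}

theorem gauge_mono_of_isSolid (hs : IsSolid s) (habs : Absorbent ℝ s) {x y : ι → ℝ}
    (hxy : |x| ≤ |y|) : gauge s x ≤ gauge s y := by
  refine le_of_forall_gt_imp_ge_of_dense fun a ha => ?_
  obtain ⟨b, hb, hba, hy⟩ := exists_lt_of_gauge_lt habs ha
  rw [Set.mem_smul_set_iff_inv_smul_mem₀ hb.ne'] at hy
  have hx : b⁻¹ • x ∈ s := hs hy fun j => by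
    change |b⁻¹ * x j| ≤ |b⁻¹ * y j|
    rw [abs_mul, abs_mul]
    exact mul_le_mul_of_nonneg_left (hxy j) (abs_nonneg _)
  exact (gauge_le_of_mem hb.le ((Set.mem_smul_set_iff_inv_smul_mem₀ hb.ne' _ _).2 hx)).trans hba.le

theorem mem_nhds_zero_of_isSolid [Finite ι] (hs : IsSolid s) {w : ι → ℝ} (hw : w ∈ s)
    (hw0 : ∀ j, w j ≠ 0) : s ∈ 𝓝 0 := by
  have hbox : Set.univ.pi (fun j => Metric.closedBall (0 : ℝ) |w j|) ∈ 𝓝 (0 : ι → ℝ) :=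
    set_pi_mem_nhds Set.finite_univ fun j _ =>
      Metric.closedBall_mem_nhds 0 (abs_pos.2 (hw0 j))
  exact Filter.mem_of_superset hbox fun y hy =>
    hs hw fun j => mem_closedBall_zero_iff.1 (hy j trivial)

theorem mem_convexHull_abs_eq_one [Finite ι] {t : ι → ℝ} (ht : ∀ j, |t j| ≤ 1) :
    t ∈ convexHull ℝ {ε : ι → ℝ | ∀ j, |ε j| = 1} := by
  have hvertices : Set.univ.pi (fun _ : ι => ({-1, 1} : Set ℝ)) ⊆ {ε | ∀ j, |ε j| = 1} :=
    fun ε hε j => (abs_eq zero_le_one).2 (hε j trivial).symm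
  refine convexHull_mono hvertices (mem_convexHull_pi fun j _ => ?_)
  rw [convexHull_pair, segment_eq_Icc (by norm_num)]
  exact abs_le.1 (ht j)

theorem isSolid_convexHull [Finite ι] (hs : ∀ v ∈ s, ∀ w, |w| = |v| → w ∈ s) :
    IsSolid (convexHull ℝ s) := by
  intro x hx y hyx
  have hsign : ∀ ε : ι → ℝ, (∀ j, |ε j| = 1) → ε * x ∈ convexHull ℝ s := fun ε hε =>
    convexHull_min (t := LinearMap.mulLeft ℝ ε ⁻¹' convexHull ℝ s)
      (fun v hv => subset_convexHull ℝ s <| hs v hv _ <| funext fun j =>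
        (abs_mul _ _).trans <| by rw [hε, one_mul]; rfl)
      ((convex_convexHull ℝ s).linear_preimage _) hx
  have hcube : ∀ t ∈ convexHull ℝ {ε : ι → ℝ | ∀ j, |ε j| = 1}, t * x ∈ convexHull ℝ s :=
    fun t ht => convexHull_min (t := LinearMap.mulRight ℝ x ⁻¹' convexHull ℝ s) hsign
      ((convex_convexHull ℝ s).linear_preimage _) ht
  have hquot : ∀ j, |y j / x j| ≤ 1 := fun j => by
    rw [abs_div]
    exact div_le_one_of_le₀ (hyx j) (abs_nonneg _)
  have hy : y / x * x = y := funext fun j =>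
    div_mul_cancel_of_imp fun hxj => by simpa [hxj] using hyx j
  exact hy ▸ hcube _ (mem_convexHull_abs_eq_one hquot)

end Solid

section BlockSums

variable {m : ℕ} {N : Fin m → ℕ} {C : (Fin m → ℤ) → ℝ} {D E : (Σ i, Fin (N i)) → ℤ}

theorem inAbar_iff_abs_le_one : inAbar D ↔ ∀ j, |D j| ≤ 1 :=
  forall_congr' fun j => by rw [abs_le]; omega

theorem preOrdInt_blockAbsSum (h : ∀ j, |D j| ≤ |E j|) :
    PreOrdInt (blockAbsSum N D) (blockAbsSum N E) := by
  intro i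
  have hD : 0 ≤ blockAbsSum N D i := Finset.sum_nonneg fun _ _ => abs_nonneg _
  have hDE : blockAbsSum N D i ≤ blockAbsSum N E i := Finset.sum_le_sum fun k _ => h ⟨i, k⟩
  exact ⟨abs_le_abs_of_nonneg hD hDE, mul_nonneg hD (hD.trans hDE)⟩

theorem cD_congr_abs (h : ∀ j, |D j| = |E j|) : cD N C D = cD N C E :=
  congrArg C (funext fun i => Finset.sum_congr rfl fun k _ => h ⟨i, k⟩)

theorem blockAbsSum_eq_zero : blockAbsSum N D = 0 ↔ D = 0 := by
  simp [funext_iff, blockAbsSum, Finset.sum_eq_zero_iff_of_nonneg, Sigma.forall]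

theorem cD_eq_zero (hzero : ∀ x, C x = 0 ↔ x = 0) : cD N C D = 0 ↔ D = 0 :=
  (hzero _).trans blockAbsSum_eq_zero

theorem qD_eq_smul : qD N C D = (cD N C D)⁻¹ • fun j => (D j : ℝ) :=
  funext fun _ => div_eq_inv_mul _ _

end BlockSums

section UnitBall

variable {m : ℕ} {N : Fin m → ℕ} {C : (Fin m → ℤ) → ℝ} {D : (Σ i, Fin (N i)) → ℤ}

theorem qD_mem_Kconv (hA : inAbar D) (hD : D ≠ 0) : qD N C D ∈ Kconv N C :=
  subset_convexHull ℝ _ ⟨D, hA, hD, rfl⟩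

theorem isCompact_Kconv : IsCompact (Kconv N C) := by
  have hfin : {D : (Σ i, Fin (N i)) → ℤ | inAbar D}.Finite :=
    Set.Finite.pi' fun _ => Set.toFinite {-1, 0, 1}
  have hvertices : {v | ∃ D, inAbar D ∧ D ≠ 0 ∧ v = qD N C D}.Finite :=
    (hfin.image (qD N C)).subset fun _ ⟨D, hA, _, hv⟩ => ⟨D, hA, hv.symm⟩
  exact hvertices.isCompact_convexHull ℝ

theorem exists_qD_eq_of_abs_eq {w : (Σ i, Fin (N i)) → ℝ} (hw : |w| = |qD N C D|) :
    ∃ E, (∀ j, |E j| = |D j|) ∧ w = qD N C E := by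
  have hcoord : ∀ j, ∃ e : ℤ, |e| = |D j| ∧ w j = e / cD N C D := fun j => by
    rcases abs_eq_abs.1 (congrFun hw j) with h | h
    · exact ⟨D j, rfl, h⟩
    · exact ⟨-D j, abs_neg _, by rw [h, qD]; push_cast; rw [neg_div]⟩
  choose E hE hwE using hcoord
  exact ⟨E, hE, funext fun j => by rw [hwE, qD, cD_congr_abs hE]⟩

theorem isSolid_Kconv : IsSolid (Kconv N C) := by
  refine isSolid_convexHull ?_
  rintro _ ⟨D, hA, hD, rfl⟩ w hw
  obtain ⟨E, hE, rfl⟩ := exists_qD_eq_of_abs_eq hw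
  refine ⟨E, ?_, ?_, rfl⟩
  · simpa only [inAbar_iff_abs_le_one, hE] using hA
  · rintro rfl
    exact hD (funext fun j => abs_eq_zero.1 (hE j).symm)

theorem Kconv_mem_nhds_zero [Nonempty (Σ i, Fin (N i))] (hzero : ∀ x, C x = 0 ↔ x = 0) :
    Kconv N C ∈ 𝓝 0 := by
  have hone : (1 : (Σ i, Fin (N i)) → ℤ) ≠ 0 := one_ne_zero
  refine mem_nhds_zero_of_isSolid isSolid_Kconv (qD_mem_Kconv (fun _ => .inr (.inr rfl)) hone)
    fun j => div_ne_zero ?_ ((cD_eq_zero hzero).not.2 hone)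
  simp

end UnitBall

section GaugeOfSignVectors

variable {m : ℕ} {N : Fin m → ℕ} {C : (Fin m → ℤ) → ℝ} {S : (Fin m → ℝ) → ℝ}
  {D E : (Σ i, Fin (N i)) → ℤ}

/-- The seminorm `v ↦ ∥β(v̄)∥⋆` on `ℝ^N` induced by a monotone norm `S = ∥·∥⋆` on `ℝ^m`. -/
def blockSumSeminorm (N : Fin m → ℕ) (hS : IsNorm S) (hSmono : ∀ x y, PreOrd x y → S x ≤ S y) :
    Seminorm ℝ ((Σ i, Fin (N i)) → ℝ) :=
  Seminorm.of (fun v => S fun i => ∑ k, |v ⟨i, k⟩|)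
    (fun v w => by
      have hle : ∀ i, ∑ k, |v ⟨i, k⟩ + w ⟨i, k⟩| ≤ ∑ k, |v ⟨i, k⟩| + ∑ k, |w ⟨i, k⟩| := fun i => by
        rw [← Finset.sum_add_distrib]
        exact Finset.sum_le_sum fun k _ => abs_add_le _ _
      refine (hSmono _ _ fun i => ?_).trans (hS.2.2.1 _ _)
      have hnonneg : 0 ≤ ∑ k, |v ⟨i, k⟩ + w ⟨i, k⟩| := Finset.sum_nonneg fun _ _ => abs_nonneg _
      exact ⟨abs_le_abs_of_nonneg hnonneg (hle i), mul_nonneg hnonneg (hnonneg.trans (hle i))⟩)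
    (fun a v => by
      rw [Real.norm_eq_abs, ← abs_abs a, ← hS.2.2.2]
      congr 1
      funext i
      simp only [Pi.smul_apply, smul_eq_mul, abs_mul, Finset.mul_sum])

theorem blockSumSeminorm_intCast (hS : IsNorm S) (hSmono : ∀ x y, PreOrd x y → S x ≤ S y) :
    blockSumSeminorm N hS hSmono (fun j => (D j : ℝ)) = S fun i => (blockAbsSum N D i : ℝ) := by
  simp only [blockSumSeminorm, blockAbsSum, Int.cast_sum, Int.cast_abs]
  rfl

theorem IsNorm.intCast_pos (hS : IsNorm S) {x : Fin m → ℤ} (hx : x ≠ 0) :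
    0 < S fun i => (x i : ℝ) := by
  refine (hS.1 _).lt_of_ne' fun h => hx (funext fun i => ?_)
  exact Int.cast_eq_zero.1 (congrFun ((hS.2.1 _).1 h) i)

theorem cD_mul_norm_blockAbsSum_mul_le (hC0 : ∀ x, 0 ≤ C x)
    (hmono : ∀ x y, PreOrdInt x y → C x ≤ C y) (hS : IsNorm S)
    (hratio : ∀ x x' : Fin m → ℤ, x ≠ 0 → x' ≠ 0 → PreOrdInt x' x →
      C x / S (fun i => (x i : ℝ)) ≤ C x' / S (fun i => (x' i : ℝ)))
    (hDA : inAbar D) (hEA : inAbar E) (hD : D ≠ 0) :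
    cD N C D * S (fun i => (blockAbsSum N (D * E) i : ℝ)) ≤
      S (fun i => (blockAbsSum N D i : ℝ)) * cD N C E := by
  rw [inAbar_iff_abs_le_one] at hDA hEA
  have hleD : PreOrdInt (blockAbsSum N (D * E)) (blockAbsSum N D) :=
    preOrdInt_blockAbsSum fun j => by
      simpa [abs_mul] using mul_le_of_le_one_right (abs_nonneg (D j)) (hEA j)
  have hleE : PreOrdInt (blockAbsSum N (D * E)) (blockAbsSum N E) :=
    preOrdInt_blockAbsSum fun j => by
      simpa [abs_mul] using mul_le_of_le_one_left (abs_nonneg (E j)) (hDA j)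
  have hx := blockAbsSum_eq_zero.not.2 hD
  by_cases hx' : blockAbsSum N (D * E) = 0
  · have hzero : S (fun i => (blockAbsSum N (D * E) i : ℝ)) = 0 :=
      (hS.2.1 _).2 (by simp only [hx', Pi.zero_apply, Int.cast_zero]; rfl)
    rw [hzero, mul_zero]
    exact mul_nonneg (hS.1 _) (hC0 _)
  · have h := hratio _ _ hx hx' hleD
    rw [div_le_div_iff₀ (hS.intCast_pos hx) (hS.intCast_pos hx')] at h
    calc cD N C D * S (fun i => (blockAbsSum N (D * E) i : ℝ))
        ≤ cD N C (D * E) * S (fun i => (blockAbsSum N D i : ℝ)) := h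
      _ ≤ cD N C E * S (fun i => (blockAbsSum N D i : ℝ)) :=
        mul_le_mul_of_nonneg_right (hmono _ _ hleE) (hS.1 _)
      _ = S (fun i => (blockAbsSum N D i : ℝ)) * cD N C E := mul_comm _ _

theorem cD_le_gauge_Kconv (hC0 : ∀ x, 0 ≤ C x) (hzero : ∀ x, C x = 0 ↔ x = 0)
    (hmono : ∀ x y, PreOrdInt x y → C x ≤ C y) (hS : IsNorm S)
    (hSmono : ∀ x y, PreOrd x y → S x ≤ S y)
    (hratio : ∀ x x' : Fin m → ℤ, x ≠ 0 → x' ≠ 0 → PreOrdInt x' x →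
      C x / S (fun i => (x i : ℝ)) ≤ C x' / S (fun i => (x' i : ℝ)))
    (habs : Absorbent ℝ (Kconv N C)) (hDA : inAbar D) (hD : D ≠ 0) :
    cD N C D ≤ gauge (Kconv N C) fun j => (D j : ℝ) := by
  have hc_pos : ∀ {E : (Σ i, Fin (N i)) → ℤ}, E ≠ 0 → 0 < cD N C E := fun hE =>
    (hC0 _).lt_of_ne' ((cD_eq_zero hzero).not.2 hE)
  have hSD := hS.intCast_pos (blockAbsSum_eq_zero.not.2 hD)
  let p := (blockSumSeminorm N hS hSmono).comp (LinearMap.mulLeft ℝ fun j => (D j : ℝ))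
  have hp_intCast (E) : p (fun j => (E j : ℝ)) = S fun i => (blockAbsSum N (D * E) i : ℝ) := by
    rw [← blockSumSeminorm_intCast hS hSmono, Seminorm.comp_apply]
    congr 1
    funext j
    exact (Int.cast_mul _ _).symm
  have hp_qD : ∀ v ∈ {v | ∃ E, inAbar E ∧ E ≠ 0 ∧ v = qD N C E},
      p v ≤ S (fun i => (blockAbsSum N D i : ℝ)) / cD N C D := by
    rintro _ ⟨E, hEA, hE, rfl⟩
    rw [qD_eq_smul, map_smul_eq_mul, hp_intCast, norm_inv, Real.norm_of_nonneg (hc_pos hE).le,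
      inv_mul_eq_div, div_le_div_iff₀ (hc_pos hE) (hc_pos hD), mul_comm]
    exact cD_mul_norm_blockAbsSum_mul_le hC0 hmono hS hratio hDA hEA hD
  have hp_D : p (fun j => (D j : ℝ)) = S fun i => (blockAbsSum N D i : ℝ) := by
    have hsq : blockAbsSum N (D * D) = blockAbsSum N D := funext fun i =>
      Finset.sum_congr rfl fun k _ => by rcases hDA ⟨i, k⟩ with h | h | h <;> simp [h]
    rw [hp_intCast, hsq]
  have hle := seminorm_le_mul_gauge_convexHull p habs (div_pos hSD (hc_pos hD)) hp_qD
    fun j => (D j : ℝ)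
  rwa [hp_D, div_mul_eq_mul_div, le_div_iff₀ (hc_pos hD), mul_le_mul_iff_right₀ hSD] at hle

theorem gauge_Kconv_le_cD (hC0 : ∀ x, 0 ≤ C x) (hzero : ∀ x, C x = 0 ↔ x = 0) (hDA : inAbar D)
    (hD : D ≠ 0) : gauge (Kconv N C) (fun j => (D j : ℝ)) ≤ cD N C D := by
  refine gauge_le_of_mem (hC0 _) ⟨_, qD_mem_Kconv hDA hD, ?_⟩
  simp only [qD_eq_smul]
  exact smul_inv_smul₀ ((cD_eq_zero hzero).not.2 hD) _

theorem gauge_Kconv_intCast (hC0 : ∀ x, 0 ≤ C x) (hzero : ∀ x, C x = 0 ↔ x = 0)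
    (hmono : ∀ x y, PreOrdInt x y → C x ≤ C y) (hS : IsNorm S)
    (hSmono : ∀ x y, PreOrd x y → S x ≤ S y)
    (hratio : ∀ x x' : Fin m → ℤ, x ≠ 0 → x' ≠ 0 → PreOrdInt x' x →
      C x / S (fun i => (x i : ℝ)) ≤ C x' / S (fun i => (x' i : ℝ)))
    (habs : Absorbent ℝ (Kconv N C)) (hDA : inAbar D) :
    gauge (Kconv N C) (fun j => (D j : ℝ)) = cD N C D := by
  rcases eq_or_ne D 0 with rfl | hD
  · rw [(cD_eq_zero hzero).2 rfl]
    have hcast : (fun j => (((0 : (Σ i, Fin (N i)) → ℤ) j : ℤ) : ℝ)) = 0 :=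
      funext fun _ => Int.cast_zero
    rw [hcast, gauge_zero]
  · exact (gauge_Kconv_le_cD hC0 hzero hDA hD).antisymm
      (cD_le_gauge_Kconv hC0 hzero hmono hS hSmono hratio habs hDA hD)

end GaugeOfSignVectors

section Compatibility

variable {m : ℕ} {N : Fin m → ℕ}

/-- The integer vector `Σ_i sign(θ_i) Σ_{j ∈ K_i} e_j` of the compatibility equation. -/
def signedIndicator (θ : Fin m → ℤ) (K : (i : Fin m) → Finset (Fin (N i))) :
    (Σ i, Fin (N i)) → ℤ :=
  fun j => (θ j.1).sign * if j.2 ∈ K j.1 then 1 else 0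

theorem inAbar_signedIndicator (θ : Fin m → ℤ) (K : (i : Fin m) → Finset (Fin (N i))) :
    inAbar (signedIndicator θ K) := by
  intro j
  rcases Int.sign_trichotomy (θ j.1) with h | h | h <;> simp only [signedIndicator, h] <;>
    split_ifs <;> simp

theorem blockAbsSum_signedIndicator {θ : Fin m → ℤ} {K : (i : Fin m) → Finset (Fin (N i))}
    (hK : ∀ i, (K i).card = (θ i).natAbs) :
    blockAbsSum N (signedIndicator θ K) = fun i => |θ i| := by
  funext i
  calc ∑ k, |(θ i).sign * if k ∈ K i then 1 else 0|
      = |(θ i).sign| * ∑ k, if k ∈ K i then 1 else 0 := by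
        simp only [abs_mul, Finset.mul_sum, apply_ite abs, abs_one, abs_zero]
    _ = |(θ i).sign| * |θ i| := by
        rw [Finset.sum_boole, Finset.filter_univ_mem, hK, Int.natCast_natAbs]
    _ = |θ i| := by rw [← abs_mul, Int.sign_mul_self_eq_abs, abs_abs]

theorem compatEq_of_eq_cD {C : (Fin m → ℤ) → ℝ} (habsC : ∀ x, C x = C fun i => |x i|)
    {nrm : ((Σ i, Fin (N i)) → ℝ) → ℝ}
    (hnrm : ∀ D : (Σ i, Fin (N i)) → ℤ, inAbar D → nrm (fun j => (D j : ℝ)) = cD N C D) :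
    CompatEq m N C nrm := by
  intro θ _ K hK
  calc C θ = cD N C (signedIndicator θ K) := by
        rw [habsC, cD, blockAbsSum_signedIndicator hK]
    _ = nrm fun j => (signedIndicator θ K j : ℝ) := (hnrm _ (inAbar_signedIndicator θ K)).symm
    _ = nrm fun j => ((θ j.1).sign : ℝ) * (if j.2 ∈ K j.1 then 1 else 0) := by
        simp only [signedIndicator, Int.cast_mul, Int.cast_ite, Int.cast_one, Int.cast_zero]

end Compatibility

/-- If `C : ℤ^m → [0,∞)` satisfies (i), (ii), (iii') and moreover
`C(x) = C(x̄)` for all `x`, then `K := conv {q_D : D ∈ Ā \ {0}}` is a compact, convex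
set, symmetric with respect to the origin, with `0` in its interior, and the norm on
`ℝ^N` whose unit ball is `K` is monotone and satisfies the compatibility equation
for `C`. -/
theorem convex_hull_qD_gives_compatible_norm {m : ℕ} (hm : 1 ≤ m)
    (C : (Fin m → ℤ) → ℝ)
    (hC0 : ∀ x, 0 ≤ C x)
    (heven : ∀ x, C (-x) = C x)
    (hzero : ∀ x, C x = 0 ↔ x = 0)
    (hmono : ∀ x y, PreOrdInt x y → C x ≤ C y)
    (hsublin : ∃ nrmStar : (Fin m → ℝ) → ℝ, IsNorm nrmStar ∧
      (∀ x y : Fin m → ℝ, PreOrd x y → nrmStar x ≤ nrmStar y) ∧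
      ∀ x x' : Fin m → ℤ, x ≠ 0 → x' ≠ 0 → PreOrdInt x' x →
        C x / nrmStar (fun i => (x i : ℝ)) ≤ C x' / nrmStar (fun i => (x' i : ℝ)))
    (hsuper : ∀ x, C x = C fun i => |x i|)
    (N : Fin m → ℕ) (hN : ∀ i, 0 < N i) :
    IsCompact (Kconv N C) ∧ Convex ℝ (Kconv N C) ∧
    (∀ x ∈ Kconv N C, -x ∈ Kconv N C) ∧
    (0 : (Σ i : Fin m, Fin (N i)) → ℝ) ∈ interior (Kconv N C) ∧
    ∃ nrm : ((Σ i : Fin m, Fin (N i)) → ℝ) → ℝ, IsNorm nrm ∧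
      {x | nrm x ≤ 1} = Kconv N C ∧
      (∀ x y, PreOrd x y → nrm x ≤ nrm y) ∧ CompatEq m N C nrm := by
  have : Nonempty (Σ i, Fin (N i)) := ⟨⟨⟨0, hm⟩, ⟨0, hN _⟩⟩⟩
  obtain ⟨nrmStar, hnorm, hnormMono, hratio⟩ := hsublin
  have hconv : Convex ℝ (Kconv N C) := convex_convexHull ℝ _
  have hcompact : IsCompact (Kconv N C) := isCompact_Kconv
  have hneg : ∀ x ∈ Kconv N C, -x ∈ Kconv N C := fun x hx => isSolid_Kconv hx (abs_neg x).le
  have hnhds : Kconv N C ∈ 𝓝 0 := Kconv_mem_nhds_zero hzero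
  have habsorb : Absorbent ℝ (Kconv N C) := absorbent_nhds_zero hnhds
  refine ⟨hcompact, hconv, hneg, mem_interior_iff_mem_nhds.2 hnhds, gauge (Kconv N C),
    isNorm_gauge hconv hneg habsorb (hcompact.isVonNBounded ℝ), ?_, ?_, ?_⟩
  · exact Set.ext fun x => (gauge_le_one_iff_mem_closure hconv hnhds).trans <| by
      rw [hcompact.isClosed.closure_eq]
  · exact fun x y hxy => gauge_mono_of_isSolid isSolid_Kconv habsorb fun j => (hxy j).1
  · exact compatEq_of_eq_cD hsuper fun D hD =>
      gauge_Kconv_intCast hC0 hzero hmono hnorm hnormMono hratio habsorb hD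
end

section
/- Let m ≥ 1 and let C : ℤ^m → [0,∞) satisfy: (i) C is even and C(x) = 0 iff x = 0; (ii) C(x) ≤ C(y) whenever x ⪯ y; (iii') there exists a monotone norm ∥·∥⋆ on ℝ^m such that C(x)/∥x∥⋆ ≤ C(x')/∥x'∥⋆ for all nonzero x', x ∈ ℤ^m with x' ⪯ x. Fix positive integers N_1, …, N_m with N := N_1 + … + N_m. For each sign vector s ∈ {−1,1}^m set C_s^♯ := {p ∈ ℝ^N : there exists q ∈ A_s with (τ_s)_j·(p_j − q_j) ≤ 0 for all j}, and set K := ∩_{s∈{−1,1}^m} C_s^♯. Then K is a closed, bounded, convex set, symmetric with respect to the origin, with nonempty interior, K is a monotone set (i.e. y ⪯ x and x ∈ K imply y ∈ K), and K ∩ H_s = A_s for every sign vector s ∈ {−1,1}^m. -/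
/-- `s ∈ {-1, 1}^m` is a sign vector. -/
def SignVec {m : ℕ} (s : Fin m → ℤ) : Prop := ∀ i, s i = 1 ∨ s i = -1

/-- The cost `C_s(x) := C(s_1 |x_1|, …, s_m |x_m|)`. -/
def Csgn {m : ℕ} (C : (Fin m → ℤ) → ℝ) (s : Fin m → ℤ) : (Fin m → ℤ) → ℝ :=
  fun x => C fun i => s i * |x i|

/-- The vector `τ_s ∈ ℝ^N`, equal to `s i` on the block `B_i`. -/
def tauS {m : ℕ} (N : Fin m → ℕ) (s : Fin m → ℤ) : (Σ i : Fin m, Fin (N i)) → ℝ :=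
  fun j => (s j.1 : ℝ)

/-- The orthant `H_s := {p ∈ ℝ^N : (τ_s)_j p_j ≥ 0 for all j}`. -/
def HsSet {m : ℕ} (N : Fin m → ℕ) (s : Fin m → ℤ) :
    Set ((Σ i : Fin m, Fin (N i)) → ℝ) :=
  {p | ∀ j, 0 ≤ tauS N s j * p j}

/-- `q_D^{(s)} := D / C_s(β(D̄))`. -/
noncomputable def qDs {m : ℕ} (N : Fin m → ℕ) (C : (Fin m → ℤ) → ℝ)
    (s : Fin m → ℤ) (D : (Σ i : Fin m, Fin (N i)) → ℤ) :
    (Σ i : Fin m, Fin (N i)) → ℝ :=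
  fun j => (D j : ℝ) / Csgn C s (blockAbsSum N D)

/-- `B_s := conv {q_D^{(s)} : D ∈ Ā \ {0}}`. -/
noncomputable def BsSet {m : ℕ} (N : Fin m → ℕ) (C : (Fin m → ℤ) → ℝ)
    (s : Fin m → ℤ) : Set ((Σ i : Fin m, Fin (N i)) → ℝ) :=
  convexHull ℝ {v | ∃ D, inAbar D ∧ D ≠ 0 ∧ v = qDs N C s D}

/-- `A_s := H_s ∩ B_s`. -/
noncomputable def AsSet {m : ℕ} (N : Fin m → ℕ) (C : (Fin m → ℤ) → ℝ)
    (s : Fin m → ℤ) : Set ((Σ i : Fin m, Fin (N i)) → ℝ) :=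
  HsSet N s ∩ BsSet N C s

/-- `C_s^♯ := {p ∈ ℝ^N : ∃ q ∈ A_s with (τ_s)_j (p_j - q_j) ≤ 0 for all j}`. -/
noncomputable def Csharp {m : ℕ} (N : Fin m → ℕ) (C : (Fin m → ℤ) → ℝ)
    (s : Fin m → ℤ) : Set ((Σ i : Fin m, Fin (N i)) → ℝ) :=
  {p | ∃ q ∈ AsSet N C s, ∀ j, tauS N s j * (p j - q j) ≤ 0}

/-- `K := ⋂_{s ∈ {-1,1}^m} C_s^♯`. -/
noncomputable def KsetInter {m : ℕ} (N : Fin m → ℕ) (C : (Fin m → ℤ) → ℝ) :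
    Set ((Σ i : Fin m, Fin (N i)) → ℝ) :=
  ⋂ (s : Fin m → ℤ) (_ : SignVec s), Csharp N C s

/-!
The two points that carry the proof are that `B_s` is unconditional and that dropping coordinates
sends `B_s` into `B_t`. Both follow from one statement about generators: if `d ∈ Ā` vanishes on
the blocks where `s` and `t` differ, then `E = d · D` satisfies `C_t(β(Ē)) ≤ C_s(β(D̄))` because
`C` is monotone, so `d · q_D^{(s)}` is a multiple of `q_E^{(t)}` by a factor in `[0, 1]`. As the
multipliers in the cube `[-1, 1]^N` are convex combinations of those in `Ā`, this gives
`p ∈ B_t` whenever `q ∈ B_s`, `|p| ≤ |q|` and `p` vanishes on the blocks where `s` and `t` differ.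

With `t = s` this yields `K ∩ H_s ⊆ A_s`. Conversely, given `p ∈ A_s`, zeroing the blocks where
`s` and `t` differ produces the point of `A_t` that shows `p ∈ C_t^♯`. Finally `C_s^♯` is the
Minkowski sum of the compact convex set `A_s` and the closed convex cone `H_{-s}`, and the constant
sign vectors `1` and `-1` already bound `K` from above and from below.
-/

open scoped Pointwise

theorem mul_mem_of_mem_convexHull {𝕜 A : Type*} [Semiring 𝕜] [PartialOrder 𝕜]
    [NonUnitalNonAssocSemiring A] [Module 𝕜 A] [IsScalarTower 𝕜 A A] [SMulCommClass 𝕜 A A]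
    {S T V : Set A} (hV : Convex 𝕜 V) (h : ∀ a ∈ S, ∀ b ∈ T, a * b ∈ V) {a b : A}
    (ha : a ∈ convexHull 𝕜 S) (hb : b ∈ convexHull 𝕜 T) : a * b ∈ V := by
  have hS : ∀ x ∈ S, x * b ∈ V := fun x hx =>
    convexHull_min (h x hx) (hV.linear_preimage (LinearMap.mulLeft 𝕜 x)) hb
  exact convexHull_min hS (hV.linear_preimage (LinearMap.mulRight 𝕜 b)) ha

theorem mem_convexHull_intCast_of_abs_le_one {P : Prop} {r : ℝ} (hr : |r| ≤ 1) (hP : r ≠ 0 → P) :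
    r ∈ convexHull ℝ ((↑) '' {z : ℤ | (z = -1 ∨ z = 0 ∨ z = 1) ∧ (z ≠ 0 → P)}) := by
  by_cases h0 : r = 0
  · exact subset_convexHull ℝ _ ⟨0, by simp, by simp [h0]⟩
  · have hr_seg : r ∈ segment ℝ (-1) 1 := by
      rw [segment_eq_Icc (by norm_num)]
      exact abs_le.1 hr
    refine segment_subset_convexHull ?_ ?_ hr_seg
    · exact ⟨-1, by simp [hP h0], by simp⟩
    · exact ⟨1, by simp [hP h0], by simp⟩

theorem PreOrd.mul_le_max {ι : Type*} {x y : ι → ℝ} (h : PreOrd y x) (c : ℝ) (j : ι) :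
    c * y j ≤ max (c * x j) 0 := by
  obtain ⟨habs, hsign⟩ := h j
  rcases le_or_gt 0 (c * x j) with hx | hx
  · calc c * y j ≤ |c| * |y j| := (le_abs_self _).trans_eq (abs_mul _ _)
      _ ≤ |c| * |x j| := by gcongr
      _ = c * x j := by rw [← abs_mul, abs_of_nonneg hx]
      _ ≤ max (c * x j) 0 := le_max_left _ _
  · have hprod : 0 ≤ (c * y j) * (c * x j) := by nlinarith [mul_nonneg (sq_nonneg c) hsign]
    exact (nonpos_of_mul_nonneg_left hprod hx).trans (le_max_right _ _)

section

variable {m : ℕ}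

section SignVec

variable {s t : Fin m → ℤ}

theorem SignVec.neg (hs : SignVec s) : SignVec (-s) := fun i => by
  simpa [neg_eq_iff_eq_neg] using (hs i).symm

theorem SignVec.eq_neg_of_ne (hs : SignVec s) (ht : SignVec t) {i : Fin m} (h : s i ≠ t i) :
    t i = -s i := by
  rcases hs i with h₁ | h₁ <;> rcases ht i with h₂ | h₂ <;> simp_all

theorem finite_setOf_signVec : {s : Fin m → ℤ | SignVec s}.Finite :=
  (Set.Finite.pi' (t := fun _ => ({1, -1} : Set ℤ)) fun _ => Set.toFinite _).subset
    fun _ hs i => hs i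

end SignVec

section Cost

variable {C : (Fin m → ℤ) → ℝ} {s t : Fin m → ℤ}

theorem Csgn_neg (heven : ∀ x, C (-x) = C x) (s x : Fin m → ℤ) :
    Csgn C (-s) x = Csgn C s x := by
  rw [Csgn, Csgn, ← heven]
  congr 1
  ext i
  simp

theorem Csgn_pos (hpos : ∀ x ≠ 0, 0 < C x) (hs : SignVec s) {x : Fin m → ℤ} (hx : x ≠ 0) :
    0 < Csgn C s x := by
  obtain ⟨i, hi⟩ := Function.ne_iff.1 hx
  refine hpos _ (Function.ne_iff.2 ⟨i, ?_⟩)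
  rcases hs i with h | h <;> simpa [h] using hi

theorem Csgn_le_Csgn (hmono : ∀ x y, PreOrdInt x y → C x ≤ C y) {x y : Fin m → ℤ}
    (hxy : ∀ i, |x i| ≤ |y i|) (hst : ∀ i, x i ≠ 0 → s i = t i) :
    Csgn C t x ≤ Csgn C s y := by
  refine hmono _ _ fun i => ?_
  by_cases hx : x i = 0
  · simp [hx, mul_nonneg]
  · rw [hst i hx, abs_mul, abs_mul, abs_abs, abs_abs, mul_mul_mul_comm]
    exact ⟨mul_le_mul_of_nonneg_left (hxy i) (abs_nonneg _),
      mul_nonneg (mul_self_nonneg _) (by positivity)⟩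

end Cost

variable {N : Fin m → ℕ}

section SignMatrix

variable {d D : (Σ i : Fin m, Fin (N i)) → ℤ}

theorem inAbar.neg (hD : inAbar D) : inAbar (-D) := fun j => by
  rcases hD j with h | h | h <;> simp [h]

theorem inAbar.mul (hd : inAbar d) (hD : inAbar D) : inAbar (d * D) := fun j => by
  rcases hd j with h | h | h <;> rcases hD j with h' | h' | h' <;> simp [h, h']

theorem inAbar.abs_le_one (hd : inAbar d) (j : Σ i : Fin m, Fin (N i)) : |d j| ≤ 1 := by
  rcases hd j with h | h | h <;> simp [h]

theorem SignVec.inAbar {s : Fin m → ℤ} (hs : SignVec s) :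
    _root_.inAbar fun j : Σ i : Fin m, Fin (N i) => s j.1 := fun j => by
  rcases hs j.1 with h | h <;> simp [h]

theorem finite_setOf_inAbar : {D : (Σ i : Fin m, Fin (N i)) → ℤ | inAbar D}.Finite :=
  (Set.Finite.pi' (t := fun _ => ({-1, 0, 1} : Set ℤ)) fun _ => Set.toFinite _).subset
    fun _ hD j => hD j

theorem blockAbsSum_neg (D : (Σ i : Fin m, Fin (N i)) → ℤ) :
    blockAbsSum N (-D) = blockAbsSum N D := by
  ext i
  simp [blockAbsSum]

theorem blockAbsSum_nonneg (D : (Σ i : Fin m, Fin (N i)) → ℤ) (i : Fin m) :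
    0 ≤ blockAbsSum N D i :=
  Finset.sum_nonneg fun _ _ => abs_nonneg _

theorem blockAbsSum_apply_eq_zero_iff {i : Fin m} :
    blockAbsSum N D i = 0 ↔ ∀ k, D ⟨i, k⟩ = 0 := by
  simp [blockAbsSum, Finset.sum_eq_zero_iff_of_nonneg]

theorem blockAbsSum_ne_zero (hD : D ≠ 0) : blockAbsSum N D ≠ 0 := fun h =>
  hD (funext fun j => blockAbsSum_apply_eq_zero_iff.1 (congrFun h j.1) j.2)

theorem blockAbsSum_mul_le (hd : inAbar d) (D : (Σ i : Fin m, Fin (N i)) → ℤ) (i : Fin m) :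
    blockAbsSum N (d * D) i ≤ blockAbsSum N D i :=
  Finset.sum_le_sum fun k _ => by
    rw [Pi.mul_apply, abs_mul]
    exact mul_le_of_le_one_left (abs_nonneg _) (hd.abs_le_one _)

theorem Csgn_blockAbsSum_mul_le {C : (Fin m → ℤ) → ℝ} {s t : Fin m → ℤ}
    (hmono : ∀ x y, PreOrdInt x y → C x ≤ C y) (hd : inAbar d)
    (hst : ∀ j, d j ≠ 0 → s j.1 = t j.1) (D : (Σ i : Fin m, Fin (N i)) → ℤ) :
    Csgn C t (blockAbsSum N (d * D)) ≤ Csgn C s (blockAbsSum N D) := by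
  refine Csgn_le_Csgn hmono (fun i => ?_) fun i hi => ?_
  · rw [abs_of_nonneg (blockAbsSum_nonneg _ i), abs_of_nonneg (blockAbsSum_nonneg _ i)]
    exact blockAbsSum_mul_le hd D i
  · obtain ⟨k, hk⟩ := not_forall.1 (mt blockAbsSum_apply_eq_zero_iff.2 hi)
    exact hst ⟨i, k⟩ (left_ne_zero_of_mul hk)

end SignMatrix

section Orthant

variable {s : Fin m → ℤ}

theorem tauS_neg (s : Fin m → ℤ) : tauS N (-s) = -tauS N s := by
  ext j
  simp [tauS]

theorem SignVec.abs_tauS (hs : SignVec s) (j : Σ i : Fin m, Fin (N i)) : |tauS N s j| = 1 := by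
  rcases hs j.1 with h | h <;> simp [tauS, h]

theorem SignVec.abs_eq_tauS_mul (hs : SignVec s) {p : (Σ i : Fin m, Fin (N i)) → ℝ}
    (hp : p ∈ HsSet N s) (j : Σ i : Fin m, Fin (N i)) : |p j| = tauS N s j * p j := by
  rw [← abs_of_nonneg (hp j), abs_mul, hs.abs_tauS, one_mul]

theorem neg_mem_HsSet_iff {p : (Σ i : Fin m, Fin (N i)) → ℝ} :
    -p ∈ HsSet N s ↔ p ∈ HsSet N (-s) := by
  simp [HsSet, tauS_neg]

theorem HsSet_eq_iInter (s : Fin m → ℤ) : HsSet N s = ⋂ j, {p | 0 ≤ tauS N s j * p j} := by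
  ext
  simp [HsSet]

theorem isClosed_HsSet (s : Fin m → ℤ) : IsClosed (HsSet N s) := by
  rw [HsSet_eq_iInter]
  exact isClosed_iInter fun j => isClosed_le continuous_const (by fun_prop)

theorem convex_HsSet (s : Fin m → ℤ) : Convex ℝ (HsSet N s) := by
  rw [HsSet_eq_iInter]
  exact convex_iInter fun j =>
    convex_halfSpace_ge (tauS N s j • LinearMap.proj (R := ℝ) (φ := fun _ => ℝ) j).isLinear 0

end Orthant

variable {C : (Fin m → ℤ) → ℝ} {s t : Fin m → ℤ}

section Hull

variable {p q : (Σ i : Fin m, Fin (N i)) → ℝ}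

theorem qDs_mem_BsSet {D : (Σ i : Fin m, Fin (N i)) → ℤ} (hD : inAbar D) (hD0 : D ≠ 0) :
    qDs N C s D ∈ BsSet N C s :=
  subset_convexHull ℝ _ ⟨D, hD, hD0, rfl⟩

theorem qDs_neg (D : (Σ i : Fin m, Fin (N i)) → ℤ) : qDs N C s (-D) = -qDs N C s D := by
  ext j
  simp [qDs, blockAbsSum_neg, neg_div]

theorem convex_BsSet (N : Fin m → ℕ) (C : (Fin m → ℤ) → ℝ) (s : Fin m → ℤ) :
    Convex ℝ (BsSet N C s) :=
  convex_convexHull ℝ _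

theorem neg_mem_BsSet (hq : q ∈ BsSet N C s) : -q ∈ BsSet N C s := by
  refine convexHull_min ?_ (convex_BsSet N C s).neg hq
  rintro _ ⟨D, hD, hD0, rfl⟩
  rw [Set.mem_neg, ← qDs_neg]
  exact qDs_mem_BsSet hD.neg (neg_ne_zero.2 hD0)

theorem zero_mem_BsSet {D : (Σ i : Fin m, Fin (N i)) → ℤ} (hD : inAbar D) (hD0 : D ≠ 0) :
    0 ∈ BsSet N C s := by
  have hq : qDs N C s D ∈ BsSet N C s := qDs_mem_BsSet hD hD0
  simpa using (convex_BsSet N C s).midpoint_mem hq (neg_mem_BsSet hq)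

theorem isCompact_BsSet (N : Fin m → ℕ) (C : (Fin m → ℤ) → ℝ) (s : Fin m → ℤ) :
    IsCompact (BsSet N C s) := by
  refine Set.Finite.isCompact_convexHull (𝕜 := ℝ)
    ((finite_setOf_inAbar.image (qDs N C s)).subset ?_)
  rintro _ ⟨D, hD, -, rfl⟩
  exact ⟨D, hD, rfl⟩

theorem BsSet_neg (heven : ∀ x, C (-x) = C x) (s : Fin m → ℤ) :
    BsSet N C (-s) = BsSet N C s := by
  have hq : qDs N C (-s) = qDs N C s := by
    ext D j
    rw [qDs, qDs, Csgn_neg heven]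
  rw [BsSet, hq, BsSet]

theorem mul_qDs_eq_smul_qDs {d D : (Σ i : Fin m, Fin (N i)) → ℤ}
    (hE : Csgn C t (blockAbsSum N (d * D)) ≠ 0) :
    (fun j => (d j : ℝ)) * qDs N C s D =
      (Csgn C t (blockAbsSum N (d * D)) / Csgn C s (blockAbsSum N D)) • qDs N C t (d * D) := by
  ext j
  simp only [qDs, Pi.mul_apply, Pi.smul_apply, smul_eq_mul, Int.cast_mul]
  rw [div_mul_div_comm, mul_comm (Csgn C s _), mul_div_mul_left _ _ hE, mul_div_assoc]

theorem mul_qDs_mem_BsSet (hpos : ∀ x ≠ 0, 0 < C x)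
    (hmono : ∀ x y, PreOrdInt x y → C x ≤ C y) (hs : SignVec s) (ht : SignVec t)
    {d D : (Σ i : Fin m, Fin (N i)) → ℤ} (hd : inAbar d) (hst : ∀ j, d j ≠ 0 → s j.1 = t j.1)
    (hD : inAbar D) (hD0 : D ≠ 0) :
    (fun j => (d j : ℝ)) * qDs N C s D ∈ BsSet N C t := by
  have hzero : 0 ∈ BsSet N C t := zero_mem_BsSet hD hD0
  by_cases hE : d * D = 0
  · have hprod : (fun j => (d j : ℝ)) * qDs N C s D = 0 := by
      ext j
      have hj : (d j : ℝ) * D j = 0 := mod_cast congrFun hE j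
      rw [Pi.mul_apply, qDs, ← mul_div_assoc, hj, zero_div, Pi.zero_apply]
    rwa [hprod]
  · have hposD : 0 < Csgn C s (blockAbsSum N D) := Csgn_pos hpos hs (blockAbsSum_ne_zero hD0)
    have hposE : 0 < Csgn C t (blockAbsSum N (d * D)) :=
      Csgn_pos hpos ht (blockAbsSum_ne_zero hE)
    rw [mul_qDs_eq_smul_qDs hposE.ne']
    exact (convex_BsSet N C t).smul_mem_of_zero_mem hzero (qDs_mem_BsSet (hd.mul hD) hE)
      ⟨by positivity, div_le_one_of_le₀ (Csgn_blockAbsSum_mul_le hmono hd hst D) hposD.le⟩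

theorem mem_BsSet_of_abs_le (hpos : ∀ x ≠ 0, 0 < C x)
    (hmono : ∀ x y, PreOrdInt x y → C x ≤ C y) (hs : SignVec s) (ht : SignVec t)
    (hq : q ∈ BsSet N C s) (hpq : ∀ j, |p j| ≤ |q j|) (hst : ∀ j, p j ≠ 0 → s j.1 = t j.1) :
    p ∈ BsSet N C t := by
  have hp : p = (p / q) * q := by
    ext j
    refine (div_mul_cancel_of_imp fun hqj => ?_).symm
    simpa [hqj] using hpq j
  have hcube : p / q ∈ convexHull ℝ (Set.univ.pi fun j =>
      (↑) '' {z : ℤ | (z = -1 ∨ z = 0 ∨ z = 1) ∧ (z ≠ 0 → s j.1 = t j.1)}) := by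
    refine mem_convexHull_pi fun j _ =>
      mem_convexHull_intCast_of_abs_le_one ?_ fun hj => hst j fun h => hj ?_
    · rw [Pi.div_apply, abs_div]
      exact div_le_one_of_le₀ (hpq j) (abs_nonneg _)
    · rw [Pi.div_apply, h, zero_div]
  rw [hp]
  refine mul_mem_of_mem_convexHull (convex_BsSet N C t) ?_ hcube hq
  rintro r hr _ ⟨D, hD, hD0, rfl⟩
  choose d hd hdr using fun j => hr j (Set.mem_univ j)
  obtain rfl : (fun j => (d j : ℝ)) = r := funext hdr
  exact mul_qDs_mem_BsSet hpos hmono hs ht (fun j => (hd j).1) (fun j => (hd j).2) hD hD0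

end Hull

theorem isCompact_AsSet (N : Fin m → ℕ) (C : (Fin m → ℤ) → ℝ) (s : Fin m → ℤ) :
    IsCompact (AsSet N C s) :=
  (isCompact_BsSet N C s).inter_left (isClosed_HsSet s)

theorem convex_AsSet (N : Fin m → ℕ) (C : (Fin m → ℤ) → ℝ) (s : Fin m → ℤ) :
    Convex ℝ (AsSet N C s) :=
  (convex_HsSet s).inter (convex_BsSet N C s)

theorem neg_mem_AsSet (heven : ∀ x, C (-x) = C x) {q : (Σ i : Fin m, Fin (N i)) → ℝ}
    (hq : q ∈ AsSet N C (-s)) : -q ∈ AsSet N C s :=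
  ⟨neg_mem_HsSet_iff.2 hq.1, neg_mem_BsSet (BsSet_neg (N := N) heven s ▸ hq.2)⟩

theorem exists_mem_AsSet_forall_pos [Nonempty (Σ i : Fin m, Fin (N i))]
    (hpos : ∀ x ≠ 0, 0 < C x) (hs : SignVec s) :
    ∃ q ∈ AsSet N C s, ∀ j, 0 < tauS N s j * q j := by
  let D : (Σ i : Fin m, Fin (N i)) → ℤ := fun j => s j.1
  obtain ⟨j₀⟩ := ‹Nonempty (Σ i : Fin m, Fin (N i))›
  have hD0 : D ≠ 0 := Function.ne_iff.2 ⟨j₀, by rcases hs j₀.1 with h | h <;> simp [D, h]⟩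
  have hpos_D : ∀ j, 0 < tauS N s j * qDs N C s D j := fun j => by
    have hsq : 0 < tauS N s j * D j := by rcases hs j.1 with h | h <;> simp [tauS, D, h]
    rw [qDs, ← mul_div_assoc]
    exact div_pos hsq (Csgn_pos hpos hs (blockAbsSum_ne_zero hD0))
  exact ⟨qDs N C s D, ⟨fun j => (hpos_D j).le, qDs_mem_BsSet (hs.inAbar) hD0⟩, hpos_D⟩

theorem Csharp_eq_add (N : Fin m → ℕ) (C : (Fin m → ℤ) → ℝ) (s : Fin m → ℤ) :
    Csharp N C s = AsSet N C s + HsSet N (-s) := by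
  ext p
  constructor
  · rintro ⟨q, hq, hpq⟩
    exact ⟨q, hq, p - q, fun j => by simpa [tauS_neg] using hpq j, add_sub_cancel q p⟩
  · rintro ⟨q, hq, z, hz, rfl⟩
    exact ⟨q, hq, fun j => by simpa [tauS_neg] using hz j⟩

theorem isClosed_Csharp (N : Fin m → ℕ) (C : (Fin m → ℤ) → ℝ) (s : Fin m → ℤ) :
    IsClosed (Csharp N C s) :=
  Csharp_eq_add N C s ▸ (isClosed_HsSet (-s)).add_left_of_isCompact (isCompact_AsSet N C s)

theorem convex_Csharp (N : Fin m → ℕ) (C : (Fin m → ℤ) → ℝ) (s : Fin m → ℤ) :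
    Convex ℝ (Csharp N C s) :=
  Csharp_eq_add N C s ▸ (convex_AsSet N C s).add (convex_HsSet (-s))

theorem bddAbove_Csharp_one (N : Fin m → ℕ) (C : (Fin m → ℤ) → ℝ) :
    BddAbove (Csharp N C 1) := by
  obtain ⟨b, hb⟩ := (isCompact_AsSet N C 1).isBounded.bddAbove
  refine ⟨b, fun p ⟨q, hq, hpq⟩ => le_trans (fun j => ?_) (hb hq)⟩
  simpa [tauS] using hpq j

theorem bddBelow_Csharp_neg_one (N : Fin m → ℕ) (C : (Fin m → ℤ) → ℝ) :
    BddBelow (Csharp N C (-1)) := by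
  obtain ⟨b, hb⟩ := (isCompact_AsSet N C (-1)).isBounded.bddBelow
  refine ⟨b, fun p ⟨q, hq, hpq⟩ => (hb hq).trans fun j => ?_⟩
  simpa [tauS] using hpq j

theorem neg_mem_Csharp (heven : ∀ x, C (-x) = C x) {p : (Σ i : Fin m, Fin (N i)) → ℝ}
    (hp : p ∈ Csharp N C (-s)) : -p ∈ Csharp N C s := by
  obtain ⟨q, hq, hpq⟩ := hp
  refine ⟨-q, neg_mem_AsSet heven hq, fun j => ?_⟩
  have hj := hpq j
  simp only [tauS_neg, Pi.neg_apply] at hj ⊢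
  linarith

theorem Csharp_mem_nhds_zero [Nonempty (Σ i : Fin m, Fin (N i))]
    (hpos : ∀ x ≠ 0, 0 < C x) (hs : SignVec s) : Csharp N C s ∈ nhds 0 := by
  obtain ⟨q, hq, hq_pos⟩ := exists_mem_AsSet_forall_pos (N := N) hpos hs
  have hlt : ∀ᶠ p in nhds (0 : (Σ i : Fin m, Fin (N i)) → ℝ),
      ∀ j, tauS N s j * p j < tauS N s j * q j :=
    Filter.eventually_all.2 fun j =>
      (continuous_const.mul (continuous_apply j)).continuousAt.eventually_lt continuousAt_const
        (by simpa using hq_pos j)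
  filter_upwards [hlt] with p hp
  exact ⟨q, hq, fun j => by linarith [hp j]⟩

theorem mem_Csharp_of_preOrd {x y : (Σ i : Fin m, Fin (N i)) → ℝ} (hyx : PreOrd y x)
    (hx : x ∈ Csharp N C s) : y ∈ Csharp N C s := by
  obtain ⟨q, hq, hxq⟩ := hx
  refine ⟨q, hq, fun j => ?_⟩
  have hle : tauS N s j * x j ≤ tauS N s j * q j := by linarith [hxq j]
  linarith [(hyx.mul_le_max (tauS N s j) j).trans (max_le hle (hq.1 j))]

theorem Csharp_inter_HsSet_subset_AsSet (hpos : ∀ x ≠ 0, 0 < C x)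
    (hmono : ∀ x y, PreOrdInt x y → C x ≤ C y) (hs : SignVec s) :
    Csharp N C s ∩ HsSet N s ⊆ AsSet N C s := by
  rintro p ⟨⟨q, hq, hpq⟩, hp⟩
  refine ⟨hp, mem_BsSet_of_abs_le hpos hmono hs hs hq.2 (fun j => ?_) fun _ _ => rfl⟩
  rw [hs.abs_eq_tauS_mul hp, hs.abs_eq_tauS_mul hq.1]
  linarith [hpq j]

theorem AsSet_subset_Csharp (hpos : ∀ x ≠ 0, 0 < C x)
    (hmono : ∀ x y, PreOrdInt x y → C x ≤ C y) (hs : SignVec s) (ht : SignVec t) :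
    AsSet N C s ⊆ Csharp N C t := by
  intro p hp
  have htau : ∀ j : Σ i : Fin m, Fin (N i), s j.1 ≠ t j.1 → tauS N t j = -tauS N s j :=
    fun j h => by simp [tauS, hs.eq_neg_of_ne ht h]
  refine ⟨fun j => if s j.1 = t j.1 then p j else 0, ⟨fun j => ?_, ?_⟩, fun j => ?_⟩
  · by_cases h : s j.1 = t j.1
    · simpa [h, tauS] using hp.1 j
    · simp [h]
  · refine mem_BsSet_of_abs_le hpos hmono hs ht hp.2 (fun j => ?_) fun j hj => ?_
    · by_cases h : s j.1 = t j.1 <;> simp [h]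
    · exact (ite_ne_right_iff.1 hj).1
  · by_cases h : s j.1 = t j.1
    · simp [h]
    · simpa [h, htau j h] using hp.1 j

theorem mem_KsetInter_iff {p : (Σ i : Fin m, Fin (N i)) → ℝ} :
    p ∈ KsetInter N C ↔ ∀ s, SignVec s → p ∈ Csharp N C s := by
  simp [KsetInter]

theorem KsetInter_subset_Csharp (hs : SignVec s) : KsetInter N C ⊆ Csharp N C s :=
  Set.iInter₂_subset s hs

theorem isBounded_KsetInter (N : Fin m → ℕ) (C : (Fin m → ℤ) → ℝ) :
    Bornology.IsBounded (KsetInter N C) := by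
  have hone : SignVec (1 : Fin m → ℤ) := fun _ => Or.inl rfl
  exact ((bddAbove_Csharp_one N C).mono (KsetInter_subset_Csharp hone)).isBounded
    ((bddBelow_Csharp_neg_one N C).mono (KsetInter_subset_Csharp hone.neg))

theorem KsetInter_mem_nhds_zero [Nonempty (Σ i : Fin m, Fin (N i))]
    (hpos : ∀ x ≠ 0, 0 < C x) : KsetInter N C ∈ nhds 0 :=
  (Filter.biInter_mem finite_setOf_signVec).2 fun _ hs => Csharp_mem_nhds_zero hpos hs

theorem KsetInter_inter_HsSet (hpos : ∀ x ≠ 0, 0 < C x)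
    (hmono : ∀ x y, PreOrdInt x y → C x ≤ C y) (hs : SignVec s) :
    KsetInter N C ∩ HsSet N s = AsSet N C s := by
  refine Set.Subset.antisymm ?_ (Set.subset_inter ?_ Set.inter_subset_left)
  · exact (Set.inter_subset_inter_left _ (KsetInter_subset_Csharp hs)).trans
      (Csharp_inter_HsSet_subset_AsSet hpos hmono hs)
  · exact Set.subset_iInter₂ fun _ ht => AsSet_subset_Csharp hpos hmono hs ht

end

theorem unit_ball_from_orthant_pieces_general {m : ℕ} (C : (Fin m → ℤ) → ℝ)
    (heven : ∀ x, C (-x) = C x) (hpos : ∀ x ≠ 0, 0 < C x)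
    (hmono : ∀ x y, PreOrdInt x y → C x ≤ C y)
    (N : Fin m → ℕ) [Nonempty (Σ i : Fin m, Fin (N i))] :
    IsClosed (KsetInter N C) ∧
    Bornology.IsBounded (KsetInter N C) ∧
    Convex ℝ (KsetInter N C) ∧
    (∀ x ∈ KsetInter N C, -x ∈ KsetInter N C) ∧
    (interior (KsetInter N C)).Nonempty ∧
    (∀ x y : (Σ i : Fin m, Fin (N i)) → ℝ, PreOrd y x → x ∈ KsetInter N C →
      y ∈ KsetInter N C) ∧
    (∀ s : Fin m → ℤ, SignVec s → KsetInter N C ∩ HsSet N s = AsSet N C s) := by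
  refine ⟨?closed, isBounded_KsetInter N C, ?convex, ?symmetric, ?interior, ?monotone,
    fun s hs => KsetInter_inter_HsSet hpos hmono hs⟩
  case closed => exact isClosed_iInter fun s => isClosed_iInter fun _ => isClosed_Csharp N C s
  case convex => exact convex_iInter₂ fun s _ => convex_Csharp N C s
  case symmetric =>
    exact fun x hx => mem_KsetInter_iff.2 fun s hs =>
      neg_mem_Csharp heven (mem_KsetInter_iff.1 hx (-s) hs.neg)
  case interior => exact ⟨0, mem_interior_iff_mem_nhds.2 (KsetInter_mem_nhds_zero hpos)⟩
  case monotone =>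
    exact fun x y hyx hx => mem_KsetInter_iff.2 fun s hs =>
      mem_Csharp_of_preOrd hyx (mem_KsetInter_iff.1 hx s hs)

/-- Let `C : ℤ^m → [0,∞)` satisfy (i), (ii), (iii'). Then
`K := ⋂_s C_s^♯` is a closed, bounded, convex set, symmetric with respect to the
origin, with nonempty interior; it is a monotone set, and `K ∩ H_s = A_s` for every
sign vector `s`. -/
theorem unit_ball_from_orthant_pieces {m : ℕ} (hm : 1 ≤ m)
    (C : (Fin m → ℤ) → ℝ)
    (hC0 : ∀ x, 0 ≤ C x)
    (heven : ∀ x, C (-x) = C x)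
    (hzero : ∀ x, C x = 0 ↔ x = 0)
    (hmono : ∀ x y, PreOrdInt x y → C x ≤ C y)
    (hsublin : ∃ nrmStar : (Fin m → ℝ) → ℝ, IsNorm nrmStar ∧
      (∀ x y : Fin m → ℝ, PreOrd x y → nrmStar x ≤ nrmStar y) ∧
      ∀ x x' : Fin m → ℤ, x ≠ 0 → x' ≠ 0 → PreOrdInt x' x →
        C x / nrmStar (fun i => (x i : ℝ)) ≤ C x' / nrmStar (fun i => (x' i : ℝ)))
    (N : Fin m → ℕ) (hN : ∀ i, 0 < N i) :
    IsClosed (KsetInter N C) ∧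
    Bornology.IsBounded (KsetInter N C) ∧
    Convex ℝ (KsetInter N C) ∧
    (∀ x ∈ KsetInter N C, -x ∈ KsetInter N C) ∧
    (interior (KsetInter N C)).Nonempty ∧
    (∀ x y : (Σ i : Fin m, Fin (N i)) → ℝ, PreOrd y x → x ∈ KsetInter N C →
      y ∈ KsetInter N C) ∧
    (∀ s : Fin m → ℤ, SignVec s → KsetInter N C ∩ HsSet N s = AsSet N C s) := by
  have : Nonempty (Σ i : Fin m, Fin (N i)) := ⟨⟨⟨0, hm⟩, ⟨0, hN _⟩⟩⟩
  exact unit_ball_from_orthant_pieces_general C heven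
    (fun x hx => (hC0 x).lt_of_ne' (mt (hzero x).1 hx)) hmono N
end
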